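/- arXiv:2301.00735 — 2 statements merged into one kernel-verified Lean document; each statement's English description precedes it below -/
import Mathlib

section
/- Let p > 0. Then there exists ℓ > 0 such that, setting A₀ = [−ℓ−1, −ℓ] × [0,1], A₁ = [ℓ, ℓ+1] × [0,1], and A_{1/2} = { q ∈ ℝ² : ∃ q₀ ∈ A₀, ∃ q₁ ∈ A₁ with d(q, q₀) = d(q, q₁) = (1/2)·d(q₀, q₁) } (the midpoint set of A₀ and A₁), one has m_p(A_{1/2}) < √( m_p(A₀) · m_p(A₁) ). In particular, the multiplicative (logarithmic) Brunn–Minkowski inequality BM(0,∞) fails in the weighted Grushin plane (ℝ², d, m_p). -/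
/-!
The point is a difference of scales. Both boxes have `m_p`-mass at least `ℓ ^ p`, which tends to
infinity with `ℓ`, while the midpoint set stays inside the fixed box `[-1, 1] × [-60, 61]`, whose
mass is at most `242`.

For the second claim, let `q₀ ∈ A₀` and `q₁ ∈ A₁` have abscissae `x₀ < x₁`. The curve with
control `(x₁ - x₀) * (1, c x)` for a suitable `c = O(ℓ⁻³)` joins them, so that
`d(q₀, q₁) ≤ x₁ - x₀ + 18 / ℓ ^ 3` (`grushinDist_le_boxes`). As a length always dominates the
horizontal displacement, a midpoint has abscissa within `O(ℓ⁻³)` of `(x₀ + x₁) / 2`, and a nearly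
optimal curve from it to `q₀` has length exceeding its horizontal displacement by only `O(ℓ⁻³)`.
Since `|u₂| ≤ (a / 2) (|u| - |u₁|) + |u| / a` for every `a > 0`, taking `a = ℓ ^ 2` gives
`∫ |u₂| = O(1 / ℓ)`; and `|x| = O(ℓ)` along the curve, so the vertical displacement is `O(1)`
(`IsAdmissiblePair.abs_snd_le`).
-/

open MeasureTheory Set

/-- `u` is a valid (bounded measurable) control for the Lipschitz curve `γ` in the
Grushin plane: `γ'(t) = (u₁(t), γ₁(t)·u₂(t))` for a.e. `t ∈ [0,1]`, expressed in
integral form. -/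
def IsAdmissiblePair (γ u : ℝ → ℝ × ℝ) : Prop :=
  (∃ K : NNReal, LipschitzOnWith K γ (Icc 0 1)) ∧
  AEStronglyMeasurable u (volume.restrict (Icc (0 : ℝ) 1)) ∧
  (∃ C : ℝ, ∀ t ∈ Icc (0 : ℝ) 1, ‖u t‖ ≤ C) ∧
  ∀ t ∈ Icc (0 : ℝ) 1,
    γ t = γ 0 + ∫ s in (0 : ℝ)..t, (((u s).1, (γ s).1 * (u s).2) : ℝ × ℝ)

/-- A curve is admissible if it has a control. -/
def IsAdmissible (γ : ℝ → ℝ × ℝ) : Prop := ∃ u, IsAdmissiblePair γ u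

/-- The length of an admissible curve: infimum over controls of the Euclidean
norm of the control. -/
noncomputable def curveLength (γ : ℝ → ℝ × ℝ) : ℝ :=
  sInf {L | ∃ u, IsAdmissiblePair γ u ∧
    L = ∫ t in (0 : ℝ)..1, Real.sqrt ((u t).1 ^ 2 + (u t).2 ^ 2)}

/-- The Grushin (Carnot–Carathéodory) distance on `ℝ²`. -/
noncomputable def grushinDist (a b : ℝ × ℝ) : ℝ :=
  sInf {L | ∃ γ, IsAdmissible γ ∧ γ 0 = a ∧ γ 1 = b ∧ L = curveLength γ}

/-- A geodesic of the Grushin distance, parametrized on `[0,1]`. -/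
def IsGeodesic (γ : ℝ → ℝ × ℝ) : Prop :=
  ∀ s ∈ Icc (0 : ℝ) 1, ∀ t ∈ Icc (0 : ℝ) 1,
    grushinDist (γ s) (γ t) = |s - t| * grushinDist (γ 0) (γ 1)

/-- The weighted measure `m_p = |x|^p dx dy` on `ℝ²`. -/
noncomputable def mp (p : ℝ) : Measure (ℝ × ℝ) :=
  volume.withDensity fun z => ENNReal.ofReal (|z.1| ^ p)

/-! ### Integrability along admissible curves -/

theorem IsAdmissiblePair.intervalIntegrable_control {γ u : ℝ → ℝ × ℝ} (h : IsAdmissiblePair γ u) :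
    IntervalIntegrable u volume 0 1 := by
  obtain ⟨-, hm, ⟨C, hC⟩, -⟩ := h
  rw [intervalIntegrable_iff_integrableOn_Icc_of_le zero_le_one]
  exact Integrable.of_bound hm C
    ((ae_restrict_iff' measurableSet_Icc).2 (Filter.Eventually.of_forall hC))

theorem IsAdmissiblePair.intervalIntegrable_fst {γ u : ℝ → ℝ × ℝ} (h : IsAdmissiblePair γ u) :
    IntervalIntegrable (fun s => (u s).1) volume 0 1 := by
  have := h.intervalIntegrable_control
  exact ⟨this.1.fst, this.2.fst⟩

theorem IsAdmissiblePair.intervalIntegrable_snd {γ u : ℝ → ℝ × ℝ} (h : IsAdmissiblePair γ u) :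
    IntervalIntegrable (fun s => (u s).2) volume 0 1 := by
  have := h.intervalIntegrable_control
  exact ⟨this.1.snd, this.2.snd⟩

theorem sqrt_sq_add_sq_le (a b : ℝ) : √(a ^ 2 + b ^ 2) ≤ |a| + |b| := by
  rw [Real.sqrt_le_left (by positivity)]
  nlinarith [abs_nonneg a, abs_nonneg b, sq_abs a, sq_abs b,
    mul_nonneg (abs_nonneg a) (abs_nonneg b)]

theorem abs_le_sqrt_sq_add_sq (a b : ℝ) : |a| ≤ √(a ^ 2 + b ^ 2) :=
  Real.abs_le_sqrt (by nlinarith [sq_nonneg b])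

theorem IsAdmissiblePair.intervalIntegrable_speed {γ u : ℝ → ℝ × ℝ} (h : IsAdmissiblePair γ u) :
    IntervalIntegrable (fun s => √((u s).1 ^ 2 + (u s).2 ^ 2)) volume 0 1 := by
  have hg := h.intervalIntegrable_fst.abs.add h.intervalIntegrable_snd.abs
  refine hg.mono_fun ?_ (Filter.Eventually.of_forall fun s => ?_)
  · rw [uIoc_of_le zero_le_one]
    exact ((h.intervalIntegrable_fst.1.1.pow 2).add
      (h.intervalIntegrable_snd.1.1.pow 2)).aemeasurable.sqrt.aestronglyMeasurable
  · have h1 := sqrt_sq_add_sq_le (u s).1 (u s).2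
    simp only [Real.norm_eq_abs]
    rw [abs_of_nonneg (Real.sqrt_nonneg _)]
    exact h1.trans (le_abs_self _)

theorem IsAdmissiblePair.intervalIntegrable_velocity {γ u : ℝ → ℝ × ℝ}
    (h : IsAdmissiblePair γ u) :
    IntervalIntegrable (fun s => (((u s).1, (γ s).1 * (u s).2) : ℝ × ℝ)) volume 0 1 := by
  have h1 := h.intervalIntegrable_fst
  have hγ : ContinuousOn (fun s => (γ s).1) (uIcc 0 1) := by
    obtain ⟨⟨K, hK⟩, -⟩ := h
    rw [uIcc_of_le zero_le_one]
    exact continuous_fst.comp_continuousOn hK.continuousOn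
  have h2 := h.intervalIntegrable_snd.continuousOn_mul hγ
  exact ⟨h1.1.prodMk h2.1, h1.2.prodMk h2.2⟩

/-! ### Displacement estimates -/

theorem IsAdmissiblePair.fst_sub {γ u : ℝ → ℝ × ℝ} (h : IsAdmissiblePair γ u) {t : ℝ}
    (ht : t ∈ Icc (0 : ℝ) 1) : (γ t).1 - (γ 0).1 = ∫ s in (0 : ℝ)..t, (u s).1 := by
  have hv := h.intervalIntegrable_velocity.mono_set (c := 0) (d := t)
    (by rw [uIcc_of_le ht.1, uIcc_of_le zero_le_one]; exact Icc_subset_Icc_right ht.2)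
  have := (ContinuousLinearMap.fst ℝ ℝ ℝ).intervalIntegral_comp_comm hv
  simp only [ContinuousLinearMap.coe_fst'] at this
  rw [this, h.2.2.2 t ht]
  simp

theorem IsAdmissiblePair.snd_sub {γ u : ℝ → ℝ × ℝ} (h : IsAdmissiblePair γ u) :
    (γ 1).2 - (γ 0).2 = ∫ s in (0 : ℝ)..1, (γ s).1 * (u s).2 := by
  have := (ContinuousLinearMap.snd ℝ ℝ ℝ).intervalIntegral_comp_comm h.intervalIntegrable_velocity
  simp only [ContinuousLinearMap.coe_snd'] at this
  rw [this, h.2.2.2 1 (by simp)]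
  simp

theorem IsAdmissiblePair.abs_fst_le_integral {γ u : ℝ → ℝ × ℝ} (h : IsAdmissiblePair γ u) {t : ℝ}
    (ht : t ∈ Icc (0 : ℝ) 1) : |(γ t).1 - (γ 0).1| ≤ ∫ s in (0 : ℝ)..1, |(u s).1| := by
  rw [h.fst_sub ht]
  refine (intervalIntegral.abs_integral_le_integral_abs ht.1).trans ?_
  exact intervalIntegral.integral_mono_interval le_rfl ht.1 ht.2
    (Filter.Eventually.of_forall fun s => abs_nonneg _) h.intervalIntegrable_fst.abs

theorem IsAdmissiblePair.abs_fst_le {γ u : ℝ → ℝ × ℝ} (h : IsAdmissiblePair γ u) {t : ℝ}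
    (ht : t ∈ Icc (0 : ℝ) 1) :
    |(γ t).1 - (γ 0).1| ≤ ∫ s in (0 : ℝ)..1, √((u s).1 ^ 2 + (u s).2 ^ 2) :=
  (h.abs_fst_le_integral ht).trans <| intervalIntegral.integral_mono_on zero_le_one
    h.intervalIntegrable_fst.abs h.intervalIntegrable_speed
    fun _ _ => abs_le_sqrt_sq_add_sq _ _

/-- Weighted AM-GM applied to `b ^ 2 = (n - |a|) (n + |a|)` with `n = √(a ^ 2 + b ^ 2)`. -/
theorem abs_le_weighted (a b c : ℝ) (hc : 0 < c) :
    |b| ≤ c / 2 * (√(a ^ 2 + b ^ 2) - |a|) + √(a ^ 2 + b ^ 2) / c := by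
  set n := √(a ^ 2 + b ^ 2) with hn
  have hn2 : n ^ 2 = a ^ 2 + b ^ 2 := Real.sq_sqrt (by positivity)
  have han : |a| ≤ n := abs_le_sqrt_sq_add_sq a b
  have ha := abs_nonneg a
  have hP : 0 ≤ c * (n - |a|) := mul_nonneg hc.le (by linarith)
  have hQ : 0 ≤ n / c := div_nonneg (by linarith) hc.le
  have hcQ : c * (n / c) = n := by field_simp
  have hb : b ^ 2 = (n - |a|) * (n + |a|) := by nlinarith [sq_abs a]
  refine abs_le_of_sq_le_sq ?_ (by linarith)
  nlinarith [sq_nonneg (c / 2 * (n - |a|) - n / c), mul_nonneg (sub_nonneg.2 han) (sub_nonneg.2 han)]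

/-- The vertical displacement is controlled by the excess of the length over the horizontal
displacement. -/
theorem IsAdmissiblePair.abs_snd_le {γ u : ℝ → ℝ × ℝ} (h : IsAdmissiblePair γ u) {L a : ℝ}
    (hL : L = ∫ s in (0 : ℝ)..1, √((u s).1 ^ 2 + (u s).2 ^ 2)) (ha : 0 < a) :
    |(γ 1).2 - (γ 0).2| ≤
      (|(γ 0).1| + L) * (a / 2 * (L - |(γ 1).1 - (γ 0).1|) + L / a) := by
  have hL0 : 0 ≤ L := hL ▸ intervalIntegral.integral_nonneg zero_le_one
    fun _ _ => Real.sqrt_nonneg _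
  have hspeed := h.intervalIntegrable_speed
  have hu1 := h.intervalIntegrable_fst.abs
  have hM : ∀ s ∈ Icc (0 : ℝ) 1, |(γ s).1| ≤ |(γ 0).1| + L := fun s hs => by
    have h1 := h.abs_fst_le hs
    have h2 := abs_sub_abs_le_abs_sub (γ s).1 (γ 0).1
    linarith
  have hint : IntervalIntegrable (fun s => a / 2 * (√((u s).1 ^ 2 + (u s).2 ^ 2) - |(u s).1|)
      + √((u s).1 ^ 2 + (u s).2 ^ 2) / a) volume 0 1 :=
    ((hspeed.sub hu1).const_mul _).add (hspeed.div_const _)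
  have hy : IntervalIntegrable (fun s => (γ s).1 * (u s).2) volume 0 1 :=
    ⟨h.intervalIntegrable_velocity.1.snd, h.intervalIntegrable_velocity.2.snd⟩
  calc |(γ 1).2 - (γ 0).2| = |∫ s in (0 : ℝ)..1, (γ s).1 * (u s).2| := by rw [h.snd_sub]
    _ ≤ ∫ s in (0 : ℝ)..1, |(γ s).1 * (u s).2| :=
      intervalIntegral.abs_integral_le_integral_abs zero_le_one
    _ ≤ ∫ s in (0 : ℝ)..1, (|(γ 0).1| + L) *
        (a / 2 * (√((u s).1 ^ 2 + (u s).2 ^ 2) - |(u s).1|)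
          + √((u s).1 ^ 2 + (u s).2 ^ 2) / a) := by
      refine intervalIntegral.integral_mono_on zero_le_one hy.abs (hint.const_mul _) fun s hs => ?_
      rw [abs_mul]
      exact mul_le_mul (hM s hs) (abs_le_weighted _ _ _ ha) (abs_nonneg _) (by positivity)
    _ = (|(γ 0).1| + L) * (a / 2 * (L - ∫ s in (0 : ℝ)..1, |(u s).1|) + L / a) := by
      rw [intervalIntegral.integral_const_mul, intervalIntegral.integral_add
        ((hspeed.sub hu1).const_mul _) (hspeed.div_const _), intervalIntegral.integral_const_mul,
        intervalIntegral.integral_sub hspeed hu1, intervalIntegral.integral_div, ← hL]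
    _ ≤ _ := by
      have := h.abs_fst_le_integral (t := 1) (by simp)
      gcongr

/-! ### Near-optimal curves for the Grushin distance -/

theorem curveLength_nonneg (γ : ℝ → ℝ × ℝ) : 0 ≤ curveLength γ := by
  refine Real.sInf_nonneg ?_
  rintro L ⟨u, -, rfl⟩
  exact intervalIntegral.integral_nonneg zero_le_one fun _ _ => Real.sqrt_nonneg _

theorem IsAdmissiblePair.grushinDist_le {γ u : ℝ → ℝ × ℝ} (h : IsAdmissiblePair γ u) :
    grushinDist (γ 0) (γ 1) ≤ ∫ s in (0 : ℝ)..1, √((u s).1 ^ 2 + (u s).2 ^ 2) := by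
  have h1 : grushinDist (γ 0) (γ 1) ≤ curveLength γ :=
    csInf_le ⟨0, by rintro L ⟨γ', -, -, -, rfl⟩; exact curveLength_nonneg γ'⟩
      ⟨γ, ⟨u, h⟩, rfl, rfl, rfl⟩
  refine h1.trans (csInf_le ⟨0, ?_⟩ ⟨u, h, rfl⟩)
  rintro L ⟨u', -, rfl⟩
  exact intervalIntegral.integral_nonneg zero_le_one fun _ _ => Real.sqrt_nonneg _

theorem exists_admissiblePair_lt {a b : ℝ × ℝ} (hne : ∃ γ, IsAdmissible γ ∧ γ 0 = a ∧ γ 1 = b) {r : ℝ}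
    (hr : grushinDist a b < r) :
    ∃ γ u, IsAdmissiblePair γ u ∧ γ 0 = a ∧ γ 1 = b ∧
      ∫ s in (0 : ℝ)..1, √((u s).1 ^ 2 + (u s).2 ^ 2) < r := by
  obtain ⟨γ₀, h₀, h0, h1⟩ := hne
  obtain ⟨_, ⟨γ, ⟨u, hu⟩, hγ0, hγ1, rfl⟩, hlt⟩ :=
    exists_lt_of_csInf_lt (by exact ⟨_, γ₀, h₀, h0, h1, rfl⟩) hr
  obtain ⟨_, ⟨v, hv, rfl⟩, hlt'⟩ := exists_lt_of_csInf_lt (by exact ⟨_, u, hu, rfl⟩) hlt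
  exact ⟨γ, v, hv, hγ0, hγ1, hlt'⟩

/-- A positive value of `grushinDist` cannot be the junk value `sInf ∅ = 0`. -/
theorem exists_admissible_of_pos {a b : ℝ × ℝ} (h : 0 < grushinDist a b) :
    ∃ γ, IsAdmissible γ ∧ γ 0 = a ∧ γ 1 = b := by
  by_contra hne
  have : {L | ∃ γ, IsAdmissible γ ∧ γ 0 = a ∧ γ 1 = b ∧ L = curveLength γ} = ∅ := by
    rw [eq_empty_iff_forall_notMem]
    rintro L ⟨γ, h1, h2, h3, -⟩
    exact hne ⟨γ, h1, h2, h3⟩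
  rw [grushinDist, this, Real.sInf_empty] at h
  exact lt_irrefl _ h

theorem abs_fst_le_grushinDist {a b : ℝ × ℝ}
    (hne : ∃ γ, IsAdmissible γ ∧ γ 0 = a ∧ γ 1 = b) : |b.1 - a.1| ≤ grushinDist a b := by
  refine le_of_forall_gt_imp_ge_of_dense fun r hr => ?_
  obtain ⟨γ, u, h, rfl, rfl, hlt⟩ := exists_admissiblePair_lt hne hr
  exact (h.abs_fst_le (by simp)).trans hlt.le

/-! ### Upper bound for the distance between the boxes -/

/-- The curve with `x' = Δ` and `y' = Δ c x ^ 2`, where `Δ` is the horizontal displacement. -/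
theorem isAdmissiblePair_cubic (x₀ x₁ y₀ c : ℝ) :
    IsAdmissiblePair
      (fun t => (x₀ + t * (x₁ - x₀),
        y₀ + c * ((x₀ + t * (x₁ - x₀)) ^ 3 - x₀ ^ 3) / 3))
      (fun t => (x₁ - x₀, (x₁ - x₀) * (c * (x₀ + t * (x₁ - x₀))))) := by
  refine ⟨?_, ?_, ?_, ?_⟩
  · have hd : ContDiff ℝ 1 (fun t : ℝ => ((x₀ + t * (x₁ - x₀),
        y₀ + c * ((x₀ + t * (x₁ - x₀)) ^ 3 - x₀ ^ 3) / 3) : ℝ × ℝ)) := by fun_prop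
    exact hd.contDiffOn.exists_lipschitzOnWith (by simp) (convex_Icc 0 1) isCompact_Icc
  · exact (by fun_prop : Continuous fun t : ℝ =>
      ((x₁ - x₀, (x₁ - x₀) * (c * (x₀ + t * (x₁ - x₀)))) : ℝ × ℝ)).aestronglyMeasurable
  · exact isCompact_Icc.exists_bound_of_continuousOn (Continuous.continuousOn (by fun_prop))
  · intro t ht
    rw [intervalIntegral.integral_eq_sub_of_hasDerivAt (f := fun t => (x₀ + t * (x₁ - x₀),
        y₀ + c * ((x₀ + t * (x₁ - x₀)) ^ 3 - x₀ ^ 3) / 3))]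
    · simp
    · intro s _
      have h1 : HasDerivAt (fun t : ℝ => x₀ + t * (x₁ - x₀)) (x₁ - x₀) s := by
        simpa using ((hasDerivAt_id s).mul_const (x₁ - x₀)).const_add x₀
      have h2 := ((((h1.pow 3).sub_const (x₀ ^ 3)).const_mul c).div_const 3).const_add y₀
      refine h1.prodMk (h2.congr_deriv ?_)
      simp; ring
    · exact Continuous.intervalIntegrable (by fun_prop) _ _

theorem grushinDist_le_boxes {ℓ x₀ x₁ y₀ y₁ : ℝ} (hℓ : 1 ≤ ℓ) (hx₀ : x₀ ∈ Icc (-ℓ - 1) (-ℓ))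
    (hx₁ : x₁ ∈ Icc ℓ (ℓ + 1)) (hy₀ : y₀ ∈ Icc (0 : ℝ) 1) (hy₁ : y₁ ∈ Icc (0 : ℝ) 1) :
    (∃ γ, IsAdmissible γ ∧ γ 0 = (x₀, y₀) ∧ γ 1 = (x₁, y₁)) ∧
      grushinDist (x₀, y₀) (x₁, y₁) ≤ x₁ - x₀ + 18 / ℓ ^ 3 := by
  obtain ⟨hx₀l, hx₀u⟩ := hx₀
  obtain ⟨hx₁l, hx₁u⟩ := hx₁
  have hℓ0 : 0 < ℓ := by linarith
  have hcube : 2 * ℓ ^ 3 ≤ x₁ ^ 3 - x₀ ^ 3 := by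
    have h1 : ℓ ^ 3 ≤ x₁ ^ 3 := by gcongr
    have h2 : ℓ ^ 3 ≤ (-x₀) ^ 3 := by gcongr; linarith
    have h3 : (-x₀) ^ 3 = - x₀ ^ 3 := by ring
    linarith
  have hℓ3 : 0 < ℓ ^ 3 := by positivity
  have hpos : 0 < x₁ ^ 3 - x₀ ^ 3 := by linarith
  -- this value of `c` makes the curve end at height `y₁`
  set c := 3 * (y₁ - y₀) / (x₁ ^ 3 - x₀ ^ 3) with hc
  have hc_abs : |c| ≤ 3 / (2 * ℓ ^ 3) := by
    rw [hc, abs_div, abs_of_pos hpos, abs_mul]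
    have : |y₁ - y₀| ≤ 1 := abs_le.2 ⟨by linarith [hy₀.2, hy₁.1], by linarith [hy₁.2, hy₀.1]⟩
    gcongr
    rw [abs_of_pos (by norm_num : (0 : ℝ) < 3)]
    linarith
  have hpair := isAdmissiblePair_cubic x₀ x₁ y₀ c
  have h0 : (x₀ + 0 * (x₁ - x₀), y₀ + c * ((x₀ + 0 * (x₁ - x₀)) ^ 3 - x₀ ^ 3) / 3) = (x₀, y₀) := by
    simp
  have h1 : (x₀ + 1 * (x₁ - x₀), y₀ + c * ((x₀ + 1 * (x₁ - x₀)) ^ 3 - x₀ ^ 3) / 3) = (x₁, y₁) := by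
    ext
    · simp
    · simp only [one_mul, add_sub_cancel]
      rw [hc]; field_simp; ring
  refine ⟨⟨_, ⟨_, hpair⟩, h0, h1⟩, ?_⟩
  have hle := hpair.grushinDist_le
  simp only at hle
  rw [h0, h1] at hle
  refine hle.trans ?_
  have hΔ : 0 ≤ x₁ - x₀ := by linarith
  have hbound : ∀ t ∈ Icc (0 : ℝ) 1,
      √((x₁ - x₀) ^ 2 + ((x₁ - x₀) * (c * (x₀ + t * (x₁ - x₀)))) ^ 2) ≤
        x₁ - x₀ + 18 / ℓ ^ 3 := by
    rintro t ⟨ht0, ht1⟩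
    set x := x₀ + t * (x₁ - x₀) with hx
    have hxa : |x| ≤ 2 * ℓ := abs_le.2 ⟨by nlinarith, by nlinarith⟩
    have hcx : |c * x| ≤ 3 / ℓ ^ 2 := by
      rw [abs_mul]
      calc |c| * |x| ≤ 3 / (2 * ℓ ^ 3) * (2 * ℓ) := by gcongr
        _ = 3 / ℓ ^ 2 := by field_simp
    have hcx2 : (c * x) ^ 2 ≤ 9 / ℓ ^ 4 := by
      rw [← sq_abs]
      calc |c * x| ^ 2 ≤ (3 / ℓ ^ 2) ^ 2 := by gcongr
        _ = 9 / ℓ ^ 4 := by field_simp; norm_num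
    calc √((x₁ - x₀) ^ 2 + ((x₁ - x₀) * (c * x)) ^ 2)
        ≤ (x₁ - x₀) * (1 + (c * x) ^ 2 / 2) := by
          rw [Real.sqrt_le_left (by positivity)]
          nlinarith [sq_nonneg ((x₁ - x₀) * (c * x) ^ 2)]
      _ = x₁ - x₀ + (x₁ - x₀) * ((c * x) ^ 2 / 2) := by ring
      _ ≤ x₁ - x₀ + (4 * ℓ) * ((9 / ℓ ^ 4) / 2) := by
          gcongr
          linarith
      _ = x₁ - x₀ + 18 / ℓ ^ 3 := by field_simp; ring
  have := intervalIntegral.integral_mono_on zero_le_one hpair.intervalIntegrable_speed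
    (intervalIntegrable_const (c := x₁ - x₀ + 18 / ℓ ^ 3)) hbound
  simpa using this

/-! ### Confinement of midpoints and masses of boxes -/

theorem midpoint_mem_box {ℓ : ℝ} (hℓ : 3 ≤ ℓ) {q q₀ q₁ : ℝ × ℝ}
    (hq₀ : q₀ ∈ Icc (-ℓ - 1) (-ℓ) ×ˢ Icc (0 : ℝ) 1) (hq₁ : q₁ ∈ Icc ℓ (ℓ + 1) ×ˢ Icc (0 : ℝ) 1)
    (h₀ : grushinDist q q₀ = grushinDist q₀ q₁ / 2)
    (h₁ : grushinDist q q₁ = grushinDist q₀ q₁ / 2) :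
    q ∈ Icc (-1 : ℝ) 1 ×ˢ Icc (-60 : ℝ) 61 := by
  obtain ⟨x₀, y₀⟩ := q₀
  obtain ⟨x₁, y₁⟩ := q₁
  obtain ⟨x, y⟩ := q
  obtain ⟨hx₀, hy₀⟩ := hq₀
  obtain ⟨hx₁, hy₁⟩ := hq₁
  obtain ⟨hne, hD⟩ := grushinDist_le_boxes (by linarith) hx₀ hx₁ hy₀ hy₁
  have hDl := abs_fst_le_grushinDist hne
  simp only [mem_Icc] at hx₀ hx₁ hy₀ hy₁ hDl
  rw [abs_of_nonneg (by linarith)] at hDl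
  set D := grushinDist (x₀, y₀) (x₁, y₁)
  have hℓ0 : 0 < ℓ := by linarith
  have hε0 : 0 < 18 / ℓ ^ 3 := by positivity
  have hε1 : 18 / ℓ ^ 3 ≤ 1 := by
    rw [div_le_one (by positivity)]
    calc (18 : ℝ) ≤ 3 ^ 3 := by norm_num
      _ ≤ ℓ ^ 3 := by gcongr
  set ε := 18 / ℓ ^ 3 with hε
  have hDpos : 0 < D / 2 := by linarith
  have hne₀ := exists_admissible_of_pos (h₀ ▸ hDpos)
  have hne₁ := exists_admissible_of_pos (h₁ ▸ hDpos)
  have hl₀ := abs_fst_le_grushinDist hne₀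
  have hl₁ := abs_fst_le_grushinDist hne₁
  rw [h₀] at hl₀
  rw [h₁] at hl₁
  simp only [abs_le] at hl₀ hl₁
  have hx : |x| ≤ 1 := abs_le.2 ⟨by linarith, by linarith⟩
  obtain ⟨γ, u, hγ, hγ0, hγ1, hlt⟩ := exists_admissiblePair_lt (r := D / 2 + ε) hne₀ (by rw [h₀]; linarith)
  have hL0 : 0 ≤ ∫ s in (0 : ℝ)..1, √((u s).1 ^ 2 + (u s).2 ^ 2) :=
    intervalIntegral.integral_nonneg zero_le_one fun _ _ => Real.sqrt_nonneg _
  have hy := hγ.abs_snd_le rfl (a := ℓ ^ 2) (by positivity)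
  rw [hγ0, hγ1] at hy
  set L := ∫ s in (0 : ℝ)..1, √((u s).1 ^ 2 + (u s).2 ^ 2)
  simp only at hy
  have hexc : L - |x₀ - x| ≤ 2 * ε := by
    have := neg_abs_le (x₀ - x)
    linarith
  have hL : L ≤ 2 * ℓ := by linarith
  have hy60 : |y₀ - y| ≤ 60 := by
    refine hy.trans ?_
    calc (|x| + L) * (ℓ ^ 2 / 2 * (L - |x₀ - x|) + L / ℓ ^ 2)
        ≤ (|x| + L) * (ℓ ^ 2 / 2 * (2 * ε) + 2 * ℓ / ℓ ^ 2) := by gcongr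
      _ ≤ (3 * ℓ) * (ℓ ^ 2 / 2 * (2 * ε) + 2 * ℓ / ℓ ^ 2) := by gcongr; linarith
      _ = 60 := by rw [hε]; field_simp; norm_num
  rw [abs_le] at hx hy60
  exact ⟨⟨hx.1, hx.2⟩, ⟨by simp only; linarith, by simp only; linarith⟩⟩

theorem ofReal_rpow_le_mp_box {p ℓ a : ℝ} (hp : 0 < p) (hℓ : 0 < ℓ)
    (h : ∀ x ∈ Icc a (a + 1), ℓ ≤ |x|) :
    ENNReal.ofReal (ℓ ^ p) ≤ mp p (Icc a (a + 1) ×ˢ Icc (0 : ℝ) 1) := by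
  have hm : MeasurableSet (Icc a (a + 1) ×ˢ Icc (0 : ℝ) 1) := measurableSet_Icc.prod measurableSet_Icc
  rw [mp, withDensity_apply _ hm]
  calc ENNReal.ofReal (ℓ ^ p)
      = ∫⁻ _ in Icc a (a + 1) ×ˢ Icc (0 : ℝ) 1, ENNReal.ofReal (ℓ ^ p) := by
        rw [setLIntegral_const, Measure.volume_eq_prod, Measure.prod_prod]
        simp
    _ ≤ _ := setLIntegral_mono' hm fun z hz => by
        have := h z.1 hz.1
        gcongr

theorem mp_box_le {p : ℝ} (hp : 0 < p) :
    mp p (Icc (-1 : ℝ) 1 ×ˢ Icc (-60 : ℝ) 61) ≤ 242 := by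
  have hm : MeasurableSet (Icc (-1 : ℝ) 1 ×ˢ Icc (-60 : ℝ) 61) :=
    measurableSet_Icc.prod measurableSet_Icc
  rw [mp, withDensity_apply _ hm]
  calc _ ≤ ∫⁻ _ in Icc (-1 : ℝ) 1 ×ˢ Icc (-60 : ℝ) 61, (1 : ENNReal) :=
        setLIntegral_mono' hm fun z hz => by
          rw [ENNReal.ofReal_le_one]
          exact Real.rpow_le_one (abs_nonneg _) (abs_le.2 hz.1) hp.le
    _ = 242 := by
        rw [setLIntegral_const, Measure.volume_eq_prod, Measure.prod_prod, Real.volume_Icc,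
          Real.volume_Icc, one_mul, ← ENNReal.ofReal_mul (by norm_num)]
        norm_num

theorem stmt_15 (p : ℝ) (hp : 0 < p) :
    ∃ ℓ > (0 : ℝ),
      mp p {q : ℝ × ℝ |
          ∃ q₀ ∈ Icc (-ℓ - 1) (-ℓ) ×ˢ Icc (0 : ℝ) 1,
          ∃ q₁ ∈ Icc ℓ (ℓ + 1) ×ˢ Icc (0 : ℝ) 1,
            grushinDist q q₀ = grushinDist q₀ q₁ / 2 ∧
            grushinDist q q₁ = grushinDist q₀ q₁ / 2} ^ 2
        < mp p (Icc (-ℓ - 1) (-ℓ) ×ˢ Icc (0 : ℝ) 1) *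
            mp p (Icc ℓ (ℓ + 1) ×ˢ Icc (0 : ℝ) 1) := by
  -- large enough that `ℓ ^ p > 242`
  obtain ⟨ℓ, hbig, hℓ⟩ := (((tendsto_rpow_atTop hp).eventually_gt_atTop 242).and
    (Filter.eventually_ge_atTop (3 : ℝ))).exists
  refine ⟨ℓ, by linarith, ?_⟩
  have hmid := (measure_mono (μ := mp p) (fun q hq => by
    obtain ⟨q₀, hq₀, q₁, hq₁, h₀, h₁⟩ := hq
    exact midpoint_mem_box hℓ hq₀ hq₁ h₀ h₁ :
    {q : ℝ × ℝ |
          ∃ q₀ ∈ Icc (-ℓ - 1) (-ℓ) ×ˢ Icc (0 : ℝ) 1,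
          ∃ q₁ ∈ Icc ℓ (ℓ + 1) ×ˢ Icc (0 : ℝ) 1,
            grushinDist q q₀ = grushinDist q₀ q₁ / 2 ∧
            grushinDist q q₁ = grushinDist q₀ q₁ / 2} ⊆
      Icc (-1 : ℝ) 1 ×ˢ Icc (-60 : ℝ) 61)).trans (mp_box_le hp)
  have hA₀ := ofReal_rpow_le_mp_box hp (by linarith : 0 < ℓ) (a := -ℓ - 1)
    (fun x hx => by rw [le_abs]; right; linarith [hx.2])
  have hA₁ := ofReal_rpow_le_mp_box hp (by linarith : 0 < ℓ) (a := ℓ)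
    (fun x hx => by rw [le_abs]; left; exact hx.1)
  rw [sub_add_cancel] at hA₀
  have h242 : (242 : ENNReal) < ENNReal.ofReal (ℓ ^ p) := by
    rw [ENNReal.lt_ofReal_iff_toReal_lt (by simp)]
    simpa using hbig
  rw [sq]
  exact ENNReal.mul_lt_mul (hmid.trans_lt (h242.trans_le hA₀)) (hmid.trans_lt (h242.trans_le hA₁))
end

section
/- Let p ≥ 1 and let u : ℝ² → ℝ be of class C³ (for instance smooth). Then the Bakry–Émery inequality BE(0,∞) holds pointwise at every point of the Riemannian region: for every (x,y) ∈ ℝ² with x ≠ 0, (1/2)·L_p(Γ(u))(x,y) ≥ Γ(u, L_p u)(x,y). -/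
/-!
Write `a = ∂ₓu` and `b = ∂_y u`. Expanding both sides and cancelling the third-order terms (by the
symmetry of second derivatives of `u`, `a` and `b`) leaves the Bochner-type identity
`½ L_p Γ(u) - Γ(u, L_p u) =
  (∂ₓa)² + (x² ∂_y b - a / x)² + 2 (x ∂ₓb + b)² + (p - 1) (a² / x² + b²)`,
whose right-hand side is a sum of nonnegative terms when `p ≥ 1`.
-/

/-- Partial derivative in the `x`-variable of a function on `ℝ²`. -/
noncomputable def pdx (v : ℝ × ℝ → ℝ) : ℝ × ℝ → ℝ :=
  fun z => deriv (fun x => v (x, z.2)) z.1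

/-- Partial derivative in the `y`-variable of a function on `ℝ²`. -/
noncomputable def pdy (v : ℝ × ℝ → ℝ) : ℝ × ℝ → ℝ :=
  fun z => deriv (fun y => v (z.1, y)) z.2

/-- The carré du champ `Γ(v,w) = ∂ₓv ∂ₓw + x² ∂_yv ∂_yw` of the Grushin structure. -/
noncomputable def grushinGamma (v w : ℝ × ℝ → ℝ) : ℝ × ℝ → ℝ :=
  fun z => pdx v z * pdx w z + z.1 ^ 2 * pdy v z * pdy w z

/-- The weighted Grushin sub-Laplacian `L_p v = ∂ₓₓv + x² ∂_yy v + (p/x) ∂ₓ v`,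
associated with the measure `m_p = |x|^p dx dy`. -/
noncomputable def grushinLap (p : ℝ) (v : ℝ × ℝ → ℝ) : ℝ × ℝ → ℝ :=
  fun z => pdx (pdx v) z + z.1 ^ 2 * pdy (pdy v) z + (p / z.1) * pdx v z

/-- The section of `v` in the `x`-direction has derivative `Dv(1, 0)`. -/
theorem pdx_eq_fderiv {v : ℝ × ℝ → ℝ} {z : ℝ × ℝ} (hv : DifferentiableAt ℝ v z) :
    HasDerivAt (fun x => v (x, z.2)) (fderiv ℝ v z (1, 0)) z.1 := by
  have h : HasDerivAt (fun x : ℝ => (x, z.2)) ((1 : ℝ), (0 : ℝ)) z.1 :=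
    (hasDerivAt_id z.1).prodMk (hasDerivAt_const z.1 z.2)
  exact HasFDerivAt.comp_hasDerivAt (f := fun x : ℝ => (x, z.2)) z.1 hv.hasFDerivAt h

/-- The section of `v` in the `y`-direction has derivative `Dv(0, 1)`. -/
theorem pdy_eq_fderiv {v : ℝ × ℝ → ℝ} {z : ℝ × ℝ} (hv : DifferentiableAt ℝ v z) :
    HasDerivAt (fun y => v (z.1, y)) (fderiv ℝ v z (0, 1)) z.2 := by
  have h : HasDerivAt (fun y : ℝ => (z.1, y)) ((0 : ℝ), (1 : ℝ)) z.2 :=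
    (hasDerivAt_const z.2 z.1).prodMk (hasDerivAt_id z.2)
  exact HasFDerivAt.comp_hasDerivAt (f := fun y : ℝ => (z.1, y)) z.2 hv.hasFDerivAt h

theorem pdx_fun {v : ℝ × ℝ → ℝ} (hv : Differentiable ℝ v) :
    pdx v = fun z => fderiv ℝ v z (1, 0) :=
  funext fun z => (pdx_eq_fderiv (hv z)).deriv

theorem pdy_fun {v : ℝ × ℝ → ℝ} (hv : Differentiable ℝ v) :
    pdy v = fun z => fderiv ℝ v z (0, 1) :=
  funext fun z => (pdy_eq_fderiv (hv z)).deriv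

theorem hasDerivAt_pdx {v : ℝ × ℝ → ℝ} (hv : Differentiable ℝ v) (x y : ℝ) :
    HasDerivAt (fun s => v (s, y)) (pdx v (x, y)) x :=
  (pdx_eq_fderiv (z := (x, y)) (hv _)).differentiableAt.hasDerivAt

theorem hasDerivAt_pdy {v : ℝ × ℝ → ℝ} (hv : Differentiable ℝ v) (x y : ℝ) :
    HasDerivAt (fun t => v (x, t)) (pdy v (x, y)) y :=
  (pdy_eq_fderiv (z := (x, y)) (hv _)).differentiableAt.hasDerivAt

theorem contDiff_pdx {v : ℝ × ℝ → ℝ} {n : ℕ} (hv : ContDiff ℝ (n + 1) v) :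
    ContDiff ℝ n (pdx v) := by
  rw [pdx_fun (hv.differentiable (by simp))]
  exact (hv.fderiv_right le_rfl).clm_apply contDiff_const

theorem contDiff_pdy {v : ℝ × ℝ → ℝ} {n : ℕ} (hv : ContDiff ℝ (n + 1) v) :
    ContDiff ℝ n (pdy v) := by
  rw [pdy_fun (hv.differentiable (by simp))]
  exact (hv.fderiv_right le_rfl).clm_apply contDiff_const

/-- Symmetry of the mixed second partial derivatives of a `C²` function. -/
theorem pdx_pdy_comm {v : ℝ × ℝ → ℝ} (hv : ContDiff ℝ 2 v) : pdx (pdy v) = pdy (pdx v) := by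
  have h1 : Differentiable ℝ v := hv.differentiable (by simp)
  have hx : ContDiff ℝ 1 (pdx v) := contDiff_pdx (n := 1) (by simpa [one_add_one_eq_two] using hv)
  have hy : ContDiff ℝ 1 (pdy v) := contDiff_pdy (n := 1) (by simpa [one_add_one_eq_two] using hv)
  have h2 : Differentiable ℝ (fderiv ℝ v) :=
    (hv.fderiv_right (m := 1) (by norm_num [one_add_one_eq_two])).differentiable (by simp)
  rw [pdx_fun (hy.differentiable (by simp)), pdy_fun (hx.differentiable (by simp)),
    pdx_fun h1, pdy_fun h1]
  funext z
  have key : ∀ c : ℝ × ℝ, HasFDerivAt (fun w => fderiv ℝ v w c)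
      ((fderiv ℝ (fderiv ℝ v) z).flip c) z := fun c => by
    simpa using (h2 z).hasFDerivAt.clm_apply (hasFDerivAt_const c z)
  rw [(key _).fderiv, (key _).fderiv]
  exact second_derivative_symmetric (fun w => (h1 w).hasFDerivAt) (h2 z).hasFDerivAt _ _

theorem stmt_18 (p : ℝ) (hp : 1 ≤ p) (u : ℝ × ℝ → ℝ) (hu : ContDiff ℝ 3 u) :
    ∀ z : ℝ × ℝ, z.1 ≠ 0 →
      grushinGamma u (grushinLap p u) z ≤ (1 / 2) * grushinLap p (grushinGamma u u) z := by
  rintro ⟨x, y⟩ hx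
  replace hx : x ≠ 0 := hx
  have hu2 : ContDiff ℝ 2 u := hu.of_le (by norm_num)
  have ca : ContDiff ℝ 2 (pdx u) := contDiff_pdx (n := 2) (by norm_num; exact hu)
  have cb : ContDiff ℝ 2 (pdy u) := contDiff_pdy (n := 2) (by norm_num; exact hu)
  have eab : pdx (pdy u) = pdy (pdx u) := pdx_pdy_comm hu2
  have ea := pdx_pdy_comm ca
  have eb := pdx_pdy_comm cb
  -- `ea`, `eb` reduce every third derivative to `∂_y∂ₓa`, `∂_y∂_y a`, `∂ₓ∂ₓa` or `∂_y∂_y b`.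
  rw [eab] at eb
  have d1 : ∀ {v : ℝ × ℝ → ℝ}, ContDiff ℝ 2 v →
      Differentiable ℝ v ∧ Differentiable ℝ (pdx v) ∧ Differentiable ℝ (pdy v) := fun {v} hv =>
    ⟨hv.differentiable (by simp),
      (contDiff_pdx (n := 1) (by norm_num [one_add_one_eq_two]; exact hv)).differentiable (by simp),
      (contDiff_pdy (n := 1) (by norm_num [one_add_one_eq_two]; exact hv)).differentiable (by simp)⟩
  obtain ⟨da, dax, day⟩ := d1 ca
  obtain ⟨db, -, dby⟩ := d1 cb
  generalize hA : pdx u = a at *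
  generalize hB : pdy u = b at *
  have sq_x : ∀ s : ℝ, HasDerivAt (fun s : ℝ => s ^ 2) (2 * s) s := fun s => by
    simpa using hasDerivAt_pow 2 s
  have hG : grushinGamma u u = fun w => a w * a w + w.1 ^ 2 * b w * b w := by
    funext w; simp only [grushinGamma, hA, hB]
  have hL : grushinLap p u = fun w => pdx a w + w.1 ^ 2 * pdy b w + (p / w.1) * a w := by
    funext w; simp only [grushinLap, hA, hB]
  have hGx : pdx (grushinGamma u u) = fun w =>
      2 * (a w * pdx a w) + 2 * w.1 * (b w * b w) + 2 * w.1 ^ 2 * (b w * pdy a w) := by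
    funext ⟨s, t⟩
    have A := hasDerivAt_pdx da s t
    have B := hasDerivAt_pdx db s t
    rw [eab] at B
    rw [hG]
    refine (((A.mul A).add (((sq_x s).mul B).mul B)).congr_deriv ?_).deriv
    simp only [Pi.mul_apply]; ring
  have hGy : pdy (grushinGamma u u) = fun w =>
      2 * (a w * pdy a w) + 2 * w.1 ^ 2 * (b w * pdy b w) := by
    funext ⟨s, t⟩
    have A := hasDerivAt_pdy da s t
    have B := hasDerivAt_pdy db s t
    rw [hG]
    refine (((A.mul A).add ((B.const_mul (s ^ 2)).mul B)).congr_deriv ?_).deriv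
    ring
  have A := hasDerivAt_pdx da x y
  have B := hasDerivAt_pdx db x y
  rw [eab] at B
  have Ax := hasDerivAt_pdx dax x y
  have Ay := hasDerivAt_pdx day x y
  have By := hasDerivAt_pdx dby x y
  have A' := hasDerivAt_pdy da x y
  have B' := hasDerivAt_pdy db x y
  have Ax' := hasDerivAt_pdy dax x y
  have Ay' := hasDerivAt_pdy day x y
  have By' := hasDerivAt_pdy dby x y
  rw [ea] at Ay
  rw [eb] at By
  have hGxx : pdx (pdx (grushinGamma u u)) (x, y) =
      2 * (pdx a (x, y) ^ 2 + a (x, y) * pdx (pdx a) (x, y)) + 2 * b (x, y) ^ 2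
        + 8 * x * (b (x, y) * pdy a (x, y))
        + 2 * x ^ 2 * (pdy a (x, y) ^ 2 + b (x, y) * pdy (pdx a) (x, y)) := by
    rw [hGx]
    refine (((((A.mul Ax).const_mul 2).add (((hasDerivAt_id x).const_mul 2).mul (B.mul B))).add
      (((sq_x x).const_mul 2).mul (B.mul Ay))).congr_deriv ?_).deriv
    simp only [Pi.mul_apply, id]; ring
  have hGyy : pdy (pdy (grushinGamma u u)) (x, y) =
      2 * (pdy a (x, y) ^ 2 + a (x, y) * pdy (pdy a) (x, y))
        + 2 * x ^ 2 * (pdy b (x, y) ^ 2 + b (x, y) * pdy (pdy b) (x, y)) := by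
    rw [hGy]
    refine ((((A'.mul Ay').const_mul 2).add ((B'.mul By').const_mul (2 * x ^ 2))).congr_deriv
      ?_).deriv
    ring
  have hLx : pdx (grushinLap p u) (x, y) =
      pdx (pdx a) (x, y) + 2 * x * pdy b (x, y) + x ^ 2 * pdy (pdy a) (x, y)
        + p / x * pdx a (x, y) - p / x ^ 2 * a (x, y) := by
    rw [hL]
    have P : HasDerivAt (fun s : ℝ => p / s) (-(p / x ^ 2)) x :=
      ((hasDerivAt_const x p).div (hasDerivAt_id x) hx).congr_deriv (by simp; ring)
    refine (((Ax.add ((sq_x x).mul By)).add (P.mul A)).congr_deriv ?_).deriv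
    ring
  have hLy : pdy (grushinLap p u) (x, y) =
      pdy (pdx a) (x, y) + x ^ 2 * pdy (pdy b) (x, y) + p / x * pdy a (x, y) := by
    rw [hL]
    exact ((Ax'.add (By'.const_mul (x ^ 2))).add (A'.const_mul (p / x))).deriv
  have hR : 0 ≤ pdx a (x, y) ^ 2 + (x ^ 2 * pdy b (x, y) - a (x, y) / x) ^ 2
      + 2 * (x * pdy a (x, y) + b (x, y)) ^ 2
      + (p - 1) * ((a (x, y) / x) ^ 2 + b (x, y) ^ 2) := by
    have : 0 ≤ p - 1 := by linarith
    positivity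
  rw [← sub_nonneg]
  refine hR.trans_eq ?_
  have e1 : grushinGamma u (grushinLap p u) (x, y) = a (x, y) * pdx (grushinLap p u) (x, y)
      + x ^ 2 * b (x, y) * pdy (grushinLap p u) (x, y) := by
    simp only [grushinGamma, hA, hB]
  have e2 : grushinLap p (grushinGamma u u) (x, y) = pdx (pdx (grushinGamma u u)) (x, y)
      + x ^ 2 * pdy (pdy (grushinGamma u u)) (x, y)
      + p / x * pdx (grushinGamma u u) (x, y) := rfl
  rw [e1, e2, hGxx, hGyy, hLx, hLy, hGx]
  field_simp
  ring
end
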